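/- arXiv:1510.02722 — 2 statements merged into one kernel-verified Lean document; each statement's English description precedes it below -/
import Mathlib

section
/- Let ψ : [0,1] → ℝ^k be totally non-planar and C^{m+1}. Let Ω_A ⊆ A_k^k be compact and let I = I₁×…×I_k be a product of closed subintervals of [0,1] such that for every a ∈ Ω_A, Ψ_a is injective on I and F_ψ(a,x) ≠ 0 for all x ∈ I. For a ∈ Ω_A let ν_{a,I} := (Ψ_a)_*(λ_{[0,1]^k}|_I). Then for every ε > 0 there exists a constant C such that for every a ∈ Ω_A there exist positive measures τ₁ and τ₂ on ℝ^k with: (1) ν_{a,I} = τ₁ + τ₂; (2) τ₁ = g·λ_{ℝ^k} for some C^m function g : ℝ^k → ℝ; (3) ‖g‖_{C^m} < C; (4) τ₂(ℝ^k) < ε. -/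
open MeasureTheory

/-- The derivative of a curve `ψ : [0,1] → ℝ^k` (derivative within `[0,1]`). -/
noncomputable def curveDeriv (k : ℕ) (ψ : ℝ → (Fin k → ℝ)) (s : ℝ) : Fin k → ℝ :=
  derivWithin ψ (Set.Icc 0 1) s

/-- A function `ψ : [0,1] → ℝ^k` is totally non-planar if it is `C¹` and for every
nonzero `v ∈ ℝ^k` the set `{s ∈ [0,1] : ψ'(s)·v = 0}` has Lebesgue measure zero. -/
def TotallyNonPlanar (k : ℕ) (ψ : ℝ → (Fin k → ℝ)) : Prop :=
  ContDiffOn ℝ 1 ψ (Set.Icc 0 1) ∧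
    ∀ v : Fin k → ℝ, v ≠ 0 →
      volume {s : ℝ | s ∈ Set.Icc (0:ℝ) 1 ∧ ∑ i, curveDeriv k ψ s i * v i = 0} = 0

/-- `A_k`, the subgroup of diagonal matrices in `SL(k,ℝ)`. -/
def Ak (k : ℕ) : Type := {a : Matrix (Fin k) (Fin k) ℝ // a.IsDiag ∧ a.det = 1}

noncomputable instance (k : ℕ) : TopologicalSpace (Ak k) :=
  inferInstanceAs (TopologicalSpace {a : Matrix (Fin k) (Fin k) ℝ // a.IsDiag ∧ a.det = 1})

/-- `F_ψ(a,x) = det [a₁ ψ'(x₁), …, a_k ψ'(x_k)]`. -/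
noncomputable def Fpsi (k : ℕ) (ψ : ℝ → (Fin k → ℝ)) (a : Fin k → Ak k) (x : Fin k → ℝ) : ℝ :=
  (Matrix.of fun p i => ((a i).val.mulVec (curveDeriv k ψ (x i))) p).det

/-- `Ψ_a(x₁,…,x_k) = Σᵢ aᵢ ψ(xᵢ)`. -/
noncomputable def PsiMap (k : ℕ) (ψ : ℝ → (Fin k → ℝ)) (a : Fin k → Ak k) (x : Fin k → ℝ) :
    Fin k → ℝ :=
  ∑ i, (a i).val.mulVec (ψ (x i))

open Filter Topology in
lemma aux_slice_bound {P E : Type*} [NormedAddCommGroup P] [NormedSpace ℝ P]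
    [NormedAddCommGroup E] [NormedSpace ℝ E] (G : P × E → ℝ) (m : ℕ) (b : P) (y : E)
    (hG : ContDiffAt ℝ (m : ℕ) G (b, y)) (i : ℕ) (hi : i ≤ m) :
    ‖iteratedFDeriv ℝ i (fun y' => G (b, y')) y‖ ≤ ‖iteratedFDeriv ℝ i G (b, y)‖ := by
  have hev := hG.eventually (by simp)
  obtain ⟨s, hs, hso, hys⟩ := eventually_nhds_iff.1 hev
  set f : P × E → ℝ := fun z => G (z + (b, 0)) with hf
  set s' : Set (P × E) := (fun z => z + (b, 0)) ⁻¹' s with hs'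
  have hs'o : IsOpen s' := hso.preimage (by fun_prop)
  have hfs : ContDiffOn ℝ (m : ℕ) f s' := by
    intro z hz
    apply ContDiffAt.contDiffWithinAt
    exact ContDiffAt.comp z (hs _ hz) (by fun_prop)
  set L : E →L[ℝ] P × E := ContinuousLinearMap.inr ℝ P E with hL
  have e1 : (fun y' => G (b, y')) = f ∘ L := by
    ext y'; simp [hf, hL]
  have hy' : L y ∈ s' := by simp [hs', hL, hys]
  have hpo : IsOpen (L ⁻¹' s') := hs'o.preimage L.continuous
  have key := L.iteratedFDerivWithin_comp_right hfs hs'o.uniqueDiffOn hpo.uniqueDiffOn hy'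
    (i := i) (by exact_mod_cast hi)
  rw [iteratedFDerivWithin_of_isOpen i hpo hy', iteratedFDerivWithin_of_isOpen i hs'o hy'] at key
  rw [e1, key]
  have e2 : iteratedFDeriv ℝ i f (L y) = iteratedFDeriv ℝ i G (b, y) := by
    rw [hf, iteratedFDeriv_comp_add_right]; simp [hL]
  rw [e2]
  refine (ContinuousMultilinearMap.norm_compContinuousLinearMap_le _ _).trans ?_
  have : ∏ _j : Fin i, ‖L‖ ≤ 1 := by
    apply Finset.prod_le_one
    · intros; positivity
    · intros; exact ContinuousLinearMap.norm_inr_le_one ℝ P E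
  calc _ ≤ ‖iteratedFDeriv ℝ i G (b, y)‖ * 1 := by gcongr
    _ = _ := mul_one _

open Filter Topology in
lemma aux_local {P E : Type*} [NormedAddCommGroup P] [NormedSpace ℝ P] [FiniteDimensional ℝ P]
    [NormedAddCommGroup E] [NormedSpace ℝ E] [FiniteDimensional ℝ E] (m : ℕ)
    (Ψ : P × E → E) (U : Set E) (hU : IsOpen U) (Ω : Set P)
    (h : P × E → ℝ) (g : P → E → ℝ)
    (hg : ∀ b ∈ Ω, ∀ x ∈ U, g b (Ψ (b, x)) = h (b, x)) (b₀ : P) (x₀ : E) (hx₀ : x₀ ∈ U)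
    (hΨ : ContDiffAt ℝ (m + 1 : ℕ) Ψ (b₀, x₀)) (hh : ContDiffAt ℝ (m : ℕ) h (b₀, x₀))
    (hinv : Function.Injective (fun e => fderiv ℝ Ψ (b₀, x₀) (0, e))) :
    ∃ C : ℝ, ∀ᶠ z in 𝓝 (b₀, x₀), z.1 ∈ Ω → ContDiffAt ℝ (m : ℕ) (g z.1) (Ψ z) ∧
      ∀ i ≤ m, ‖iteratedFDeriv ℝ i (g z.1) (Ψ z)‖ ≤ C := by
  have : CompleteSpace P := FiniteDimensional.complete ℝ P
  have : CompleteSpace E := FiniteDimensional.complete ℝ E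
  set Φ : P × E → P × E := fun z => (z.1, Ψ z) with hΦ
  have hΦc : ContDiffAt ℝ (m + 1 : ℕ) Φ (b₀, x₀) := contDiffAt_fst.prodMk hΨ
  have hm0 : ((m + 1 : ℕ) : WithTop ℕ∞) ≠ 0 := by exact_mod_cast Nat.succ_ne_zero m
  set D : P × E →L[ℝ] P × E :=
    (ContinuousLinearMap.fst ℝ P E).prod (fderiv ℝ Ψ (b₀, x₀)) with hD
  have hΦd : HasFDerivAt Φ D (b₀, x₀) :=
    hasFDerivAt_fst.prodMk (hΨ.differentiableAt hm0).hasFDerivAt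
  have hDinj : Function.Injective D := by
    rw [injective_iff_map_eq_zero]
    rintro ⟨p, e⟩ hpe
    have h1 : p = 0 := by simpa [hD] using congrArg Prod.fst hpe
    have h2 : fderiv ℝ Ψ (b₀, x₀) (p, e) = 0 := by simpa [hD] using congrArg Prod.snd hpe
    subst h1
    have h3 : e = 0 := hinv (by
      show fderiv ℝ Ψ (b₀, x₀) (0, e) = fderiv ℝ Ψ (b₀, x₀) (0, 0)
      rw [h2]; exact (map_zero _).symm)
    rw [h3]; rfl
  set De : (P × E) ≃L[ℝ] (P × E) :=
    (LinearEquiv.ofInjectiveEndo (D : P × E →ₗ[ℝ] P × E) hDinj).toContinuousLinearEquiv with hDe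
  have hDeD : (De : P × E →L[ℝ] P × E) = D := by
    ext z <;> rfl
  rw [← hDeD] at hΦd
  set inv := hΦc.localInverse hΦd hm0 with hinvdef
  have hinvc : ContDiffAt ℝ (m + 1 : ℕ) inv (Φ (b₀, x₀)) := hΦc.to_localInverse hΦd hm0
  have hinv0 : inv (Φ (b₀, x₀)) = (b₀, x₀) := hΦc.localInverse_apply_image hΦd hm0
  have hright : ∀ᶠ w in 𝓝 (Φ (b₀, x₀)), Φ (inv w) = w :=
    (hΦc.hasStrictFDerivAt' hΦd hm0).eventually_right_inverse
  have hGc : ContDiffAt ℝ (m : ℕ) (h ∘ inv) (Φ (b₀, x₀)) := by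
    apply ContDiffAt.comp
    · rw [hinv0]; exact hh
    · exact hinvc.of_le (by exact_mod_cast Nat.le_succ m)
  have hUev : ∀ᶠ w in 𝓝 (Φ (b₀, x₀)), (inv w).2 ∈ U := by
    have : ContinuousAt (fun w => (inv w).2) (Φ (b₀, x₀)) := hinvc.continuousAt.snd
    apply this.eventually_mem
    rw [hinv0]
    exact hU.mem_nhds hx₀
  have hbd : ∀ i : ℕ, i ≤ m → ∀ᶠ w in 𝓝 (Φ (b₀, x₀)),
      ‖iteratedFDeriv ℝ i (h ∘ inv) w‖ ≤ ‖iteratedFDeriv ℝ i (h ∘ inv) (Φ (b₀, x₀))‖ + 1 := by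
    intro i hi
    have := (hGc.continuousAt_iteratedFDeriv (k := i) (by exact_mod_cast hi)).norm
    filter_upwards [this.eventually_lt_const (lt_add_one _)] with w hw using hw.le
  have hbd' : ∀ᶠ w in 𝓝 (Φ (b₀, x₀)), ∀ i ∈ Finset.range (m + 1),
      ‖iteratedFDeriv ℝ i (h ∘ inv) w‖ ≤ ‖iteratedFDeriv ℝ i (h ∘ inv) (Φ (b₀, x₀))‖ + 1 := by
    rw [eventually_all_finset]
    intro i hi
    exact hbd i (by simpa [Nat.lt_succ_iff] using hi)
  set C : ℝ := ∑ i ∈ Finset.range (m + 1),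
    (‖iteratedFDeriv ℝ i (h ∘ inv) (Φ (b₀, x₀))‖ + 1) with hC
  refine ⟨C, ?_⟩
  have hall := ((hright.and hUev).eventually_nhds.and (hbd'.and (hGc.eventually (by simp))))
  filter_upwards [hΦc.continuousAt.eventually hall] with z hz hzΩ
  obtain ⟨hz1, hz2, hz3⟩ := hz
  have heq : g z.1 =ᶠ[𝓝 (Ψ z)] fun y => (h ∘ inv) (z.1, y) := by
    have hc : ContinuousAt (fun y : E => (z.1, y)) (Ψ z) := by fun_prop
    filter_upwards [hc.eventually hz1] with y hy
    obtain ⟨hy1, hy2⟩ := hy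
    have e1 : (inv (z.1, y)).1 = z.1 := by
      have hy3 := congrArg Prod.fst hy1
      exact hy3
    have e2 : Ψ (inv (z.1, y)) = y := congrArg Prod.snd hy1
    have e3 : inv (z.1, y) = (z.1, (inv (z.1, y)).2) := Prod.ext e1 rfl
    have := hg z.1 hzΩ _ hy2
    rw [← e3, e2] at this
    exact this
  constructor
  · apply ContDiffAt.congr_of_eventuallyEq _ heq
    have hz3' : ContDiffAt ℝ (m : ℕ) (h ∘ inv) (z.1, Ψ z) := hz3
    exact ContDiffAt.comp (g := h ∘ inv) (f := fun y : E => (z.1, y)) (Ψ z) hz3' (by fun_prop)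
  · intro i hi
    have e : iteratedFDeriv ℝ i (g z.1) (Ψ z) =
        iteratedFDeriv ℝ i (fun y => (h ∘ inv) (z.1, y)) (Ψ z) :=
      (heq.iteratedFDeriv ℝ i).eq_of_nhds
    rw [e]
    refine (aux_slice_bound (h ∘ inv) m z.1 (Ψ z) hz3 i hi).trans ?_
    have him : i ∈ Finset.range (m + 1) := by simpa [Nat.lt_succ_iff] using hi
    refine (hz2 i him).trans ?_
    exact Finset.single_le_sum (f := fun i =>
      ‖iteratedFDeriv ℝ i (h ∘ inv) (Φ (b₀, x₀))‖ + 1) (fun j _ => by positivity) him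

open Filter Topology in
lemma aux_global {P E : Type*} [NormedAddCommGroup P] [NormedSpace ℝ P] [FiniteDimensional ℝ P]
    [NormedAddCommGroup E] [NormedSpace ℝ E] [FiniteDimensional ℝ E] (m : ℕ)
    (Ψ : P × E → E) (U : Set E) (hU : IsOpen U) (Ω : Set P) (hΩ : IsCompact Ω)
    (h : P × E → ℝ) (g : P → E → ℝ)
    (hg : ∀ b ∈ Ω, ∀ x ∈ U, g b (Ψ (b, x)) = h (b, x))
    (hΨ : ∀ b ∈ Ω, ∀ x ∈ U, ContDiffAt ℝ (m + 1 : ℕ) Ψ (b, x))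
    (hh : ∀ b ∈ Ω, ∀ x ∈ U, ContDiffAt ℝ (m : ℕ) h (b, x))
    (hinv : ∀ b ∈ Ω, ∀ x ∈ U, Function.Injective (fun e => fderiv ℝ Ψ (b, x) (0, e)))
    (K : Set E) (hK : IsCompact K) (hKU : K ⊆ U)
    (hg0 : ∀ b ∈ Ω, ∀ y, y ∉ (fun x => Ψ (b, x)) '' K → g b y = 0) :
    ∃ C : ℝ, ∀ b ∈ Ω, ContDiff ℝ (m : ℕ) (g b) ∧
      ∀ i ≤ m, ∀ y, ‖iteratedFDeriv ℝ i (g b) y‖ < C := by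
  have key : ∃ C : ℝ, ∀ z ∈ Ω ×ˢ K, z.1 ∈ Ω → ContDiffAt ℝ (m : ℕ) (g z.1) (Ψ z) ∧
      ∀ i ≤ m, ‖iteratedFDeriv ℝ i (g z.1) (Ψ z)‖ ≤ C := by
    refine (hΩ.prod hK).induction_on (p := fun S => ∃ C : ℝ, ∀ z ∈ S, z.1 ∈ Ω →
      ContDiffAt ℝ (m : ℕ) (g z.1) (Ψ z) ∧
      ∀ i ≤ m, ‖iteratedFDeriv ℝ i (g z.1) (Ψ z)‖ ≤ C) ⟨0, by simp⟩ ?_ ?_ ?_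
    · rintro s t hst ⟨C, hC⟩
      exact ⟨C, fun z hz => hC z (hst hz)⟩
    · rintro s t ⟨C, hC⟩ ⟨C', hC'⟩
      refine ⟨max C C', ?_⟩
      rintro z (hz | hz) hzΩ
      · exact ⟨(hC z hz hzΩ).1, fun i hi => ((hC z hz hzΩ).2 i hi).trans (le_max_left _ _)⟩
      · exact ⟨(hC' z hz hzΩ).1, fun i hi => ((hC' z hz hzΩ).2 i hi).trans (le_max_right _ _)⟩
    · rintro ⟨b, x⟩ ⟨hb, hx⟩
      obtain ⟨C, hC⟩ := aux_local m Ψ U hU Ω h g hg b x (hKU hx) (hΨ b hb x (hKU hx))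
        (hh b hb x (hKU hx)) (hinv b hb x (hKU hx))
      exact ⟨_, mem_nhdsWithin_of_mem_nhds hC, C, fun z hz => hz⟩
  obtain ⟨C, hC⟩ := key
  refine ⟨max C 0 + 1, fun b hb => ?_⟩
  have hcl : IsClosed ((fun x => Ψ (b, x)) '' K) := by
    apply IsCompact.isClosed
    apply hK.image_of_continuousOn
    intro x hx
    apply ContinuousAt.continuousWithinAt
    exact ContinuousAt.comp (g := Ψ) (f := fun x => (b, x))
      (hΨ b hb x (hKU hx)).continuousAt (by fun_prop)
  have hz : ∀ y, y ∉ (fun x => Ψ (b, x)) '' K → g b =ᶠ[𝓝 y] fun _ => 0 := by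
    intro y hy
    filter_upwards [hcl.isOpen_compl.mem_nhds hy] with y' hy'
    exact hg0 b hb y' hy'
  constructor
  · rw [contDiff_iff_contDiffAt]
    intro y
    by_cases hy : y ∈ (fun x => Ψ (b, x)) '' K
    · obtain ⟨x, hx, rfl⟩ := hy
      exact (hC (b, x) ⟨hb, hx⟩ hb).1
    · exact contDiffAt_const.congr_of_eventuallyEq (hz y hy)
  · intro i hi y
    by_cases hy : y ∈ (fun x => Ψ (b, x)) '' K
    · obtain ⟨x, hx, rfl⟩ := hy
      have := (hC (b, x) ⟨hb, hx⟩ hb).2 i hi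
      exact (this.trans (le_max_left _ 0)).trans_lt (lt_add_one _)
    · rw [((hz y hy).iteratedFDeriv ℝ i).eq_of_nhds]
      have : iteratedFDeriv ℝ i (fun _ : E => (0 : ℝ)) y = 0 := by
        have := iteratedFDeriv_fun_zero (𝕜 := ℝ) (E := E) (F := ℝ) (n := i)
        exact congrFun this y
      rw [this, norm_zero]
      positivity

lemma aux_measure {E : Type*} [NormedAddCommGroup E] [NormedSpace ℝ E] [FiniteDimensional ℝ E]
    [MeasureSpace E] [BorelSpace E] [(volume : Measure E).IsAddHaarMeasure]
    (f : E → E) (f' : E → E →L[ℝ] E) (U I : Set E) (hU : MeasurableSet U) (hI : MeasurableSet I)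
    (hUI : U ⊆ I)
    (hf : ∀ x ∈ U, HasFDerivAt f (f' x) x) (hinj : Set.InjOn f U)
    (hdet : ∀ x ∈ U, (f' x).det ≠ 0) (hfm : AEMeasurable f (volume.restrict I))
    (χ : E → ℝ) (hχ0 : ∀ x, x ∉ U → χ x = 0)
    (g : E → ℝ) (hg : ∀ x ∈ U, g (f x) = χ x / |(f' x).det|)
    (hg0 : ∀ y, y ∉ f '' U → g y = 0) :
    Measure.map f ((volume.restrict I).withDensity (fun x => ENNReal.ofReal (χ x))) =
      volume.withDensity (fun y => ENNReal.ofReal (g y)) := by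
  have hfm' : AEMeasurable f ((volume.restrict I).withDensity (fun x => ENNReal.ofReal (χ x))) :=
    hfm.mono_ac (withDensity_absolutelyContinuous _ _)
  have himg : MeasurableSet (f '' U) :=
    measurable_image_of_fderivWithin hU (fun x hx => (hf x hx).hasFDerivWithinAt) hinj
  ext s hs
  rw [Measure.map_apply_of_aemeasurable hfm' hs, withDensity_apply _ hs, withDensity_apply']
  have hR : ∫⁻ y in s, ENNReal.ofReal (g y) =
      ∫⁻ y in f '' U, s.indicator (fun y => ENNReal.ofReal (g y)) y := by
    rw [← lintegral_indicator hs, ← lintegral_indicator himg]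
    congr 1
    ext y
    by_cases hy : y ∈ f '' U
    · rw [Set.indicator_of_mem hy]
    · rw [Set.indicator_of_notMem hy]
      by_cases hys : y ∈ s
      · rw [Set.indicator_of_mem hys, hg0 y hy]; simp
      · rw [Set.indicator_of_notMem hys]
  rw [hR, lintegral_image_eq_lintegral_abs_det_fderiv_mul volume hU
    (fun x hx => (hf x hx).hasFDerivWithinAt) hinj]
  have hnull : NullMeasurableSet (f ⁻¹' s) (volume.restrict I) := hfm.nullMeasurable hs
  rw [← lintegral_indicator₀ hnull, ← lintegral_indicator hU, ← lintegral_indicator hI]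
  congr 1
  ext x
  by_cases hx : x ∈ U
  · rw [Set.indicator_of_mem hx, Set.indicator_of_mem (hUI hx)]
    by_cases hxs : f x ∈ s
    · rw [Set.indicator_of_mem hxs, Set.indicator_of_mem (show x ∈ f ⁻¹' s from hxs), hg x hx,
        ← ENNReal.ofReal_mul (abs_nonneg _)]
      congr 1
      have := abs_ne_zero.2 (hdet x hx)
      field_simp
    · rw [Set.indicator_of_notMem hxs, Set.indicator_of_notMem (show x ∉ f ⁻¹' s from hxs)]
      simp
  · rw [Set.indicator_of_notMem hx]
    by_cases hxI : x ∈ I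
    · rw [Set.indicator_of_mem hxI]
      by_cases hxs : x ∈ f ⁻¹' s
      · rw [Set.indicator_of_mem hxs, hχ0 x hx]; simp
      · rw [Set.indicator_of_notMem hxs]
    · rw [Set.indicator_of_notMem hxI]

/-- Existence of a smooth cutoff. -/
lemma aux_cutoff (k : ℕ) (U : Set (Fin k → ℝ)) (hU : IsOpen U) (hfin : volume U ≠ ⊤)
    (ε : ℝ) (hε : 0 < ε) :
    ∃ (χ : (Fin k → ℝ) → ℝ) (L : Set (Fin k → ℝ)), ContDiff ℝ (⊤ : ℕ∞) χ ∧ (∀ x, 0 ≤ χ x) ∧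
      (∀ x, χ x ≤ 1) ∧ IsCompact L ∧ L ⊆ U ∧ (∀ x, x ∉ L → χ x = 0) ∧
      ∫⁻ x in U, (1 - ENNReal.ofReal (χ x)) < ENNReal.ofReal ε := by
  obtain ⟨K, hKU, hKc, hKlt⟩ : ∃ K ⊆ U, IsCompact K ∧ volume (U \ K) < ENNReal.ofReal ε := by
    obtain ⟨K, hK, hKc, h⟩ := hU.measurableSet.exists_isCompact_sdiff_lt hfin
      (ε := ENNReal.ofReal ε) (by simpa using hε)
    exact ⟨K, hK, hKc, h⟩
  obtain ⟨L, hL, hKL, hLU⟩ := exists_compact_between hKc hU hKU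
  obtain ⟨χ, h1, h2, h3, h4⟩ := exists_contMDiff_support_eq_eq_one_iff
    (modelWithCornersSelf ℝ (Fin k → ℝ)) (n := ⊤) (isOpen_interior (s := L)) hKc.isClosed hKL
  refine ⟨χ, L, h1.contDiff, fun x => (h2 ⟨x, rfl⟩).1, fun x => (h2 ⟨x, rfl⟩).2, hL, hLU, ?_, ?_⟩
  · intro x hx
    by_contra hne
    have : x ∈ Function.support χ := hne
    rw [h3] at this
    exact hx (interior_subset this)
  · refine lt_of_le_of_lt ?_ hKlt
    have hm : MeasurableSet (U \ K) := hU.measurableSet.diff hKc.measurableSet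
    rw [← lintegral_indicator_one hm, ← lintegral_indicator hU.measurableSet]
    apply lintegral_mono
    intro x
    by_cases hx : x ∈ U
    · by_cases hxK : x ∈ K
      · simp [hx, hxK, (h4 x).1 hxK]
      · simp [hx, hxK]
    · simp [hx]

/-- The map `Ψ` with the matrices as parameters. -/
noncomputable def auxPsi (k : ℕ) (ψ : ℝ → (Fin k → ℝ))
    (z : (Fin k → Fin k → Fin k → ℝ) × (Fin k → ℝ)) : Fin k → ℝ :=
  fun p => ∑ i, ∑ q, z.1 i p q * ψ (z.2 i) q

/-- The Jacobian matrix. -/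
noncomputable def auxM (k : ℕ) (ψ : ℝ → (Fin k → ℝ))
    (z : (Fin k → Fin k → Fin k → ℝ) × (Fin k → ℝ)) : Matrix (Fin k) (Fin k) ℝ :=
  Matrix.of fun p i => ∑ q, z.1 i p q * curveDeriv k ψ (z.2 i) q

lemma aux_psi_contDiffAt (k n : ℕ) (ψ : ℝ → (Fin k → ℝ))
    (hs : ContDiffOn ℝ n ψ (Set.Icc 0 1)) (b : Fin k → Fin k → Fin k → ℝ) (x : Fin k → ℝ)
    (hx : ∀ i, x i ∈ Set.Ioo (0:ℝ) 1) : ContDiffAt ℝ n (auxPsi k ψ) (b, x) := by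
  unfold auxPsi
  rw [contDiffAt_pi]
  intro p
  apply ContDiffAt.sum
  intro i _
  apply ContDiffAt.sum
  intro q _
  apply ContDiffAt.mul
  · fun_prop
  · have h1 : ContDiffAt ℝ n ψ (x i) := hs.contDiffAt (Icc_mem_nhds (hx i).1 (hx i).2)
    have h2 : ContDiffAt ℝ n (fun s => ψ s q) (x i) := (contDiffAt_pi.1 h1) q
    exact ContDiffAt.comp (g := fun s => ψ s q)
      (f := fun z : (Fin k → Fin k → Fin k → ℝ) × (Fin k → ℝ) => z.2 i) (b, x) h2 (by fun_prop)

lemma aux_det_contDiffAt (k m : ℕ) (ψ : ℝ → (Fin k → ℝ))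
    (hs : ContDiffOn ℝ (m + 1 : ℕ) ψ (Set.Icc 0 1)) (b : Fin k → Fin k → Fin k → ℝ)
    (x : Fin k → ℝ) (hx : ∀ i, x i ∈ Set.Ioo (0:ℝ) 1) :
    ContDiffAt ℝ (m : ℕ) (fun z => (auxM k ψ z).det) (b, x) := by
  simp only [Matrix.det_apply']
  apply ContDiffAt.sum
  intro σ _
  apply ContDiffAt.mul contDiffAt_const
  apply contDiffAt_prod
  intro i _
  simp only [auxM, Matrix.of_apply]
  apply ContDiffAt.sum
  intro q _
  apply ContDiffAt.mul
  · fun_prop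
  · have h0 : ContDiffOn ℝ (m : ℕ) (curveDeriv k ψ) (Set.Icc 0 1) :=
      hs.derivWithin (uniqueDiffOn_Icc zero_lt_one) (by exact_mod_cast le_rfl)
    have h1 : ContDiffAt ℝ (m : ℕ) (curveDeriv k ψ) (x i) :=
      h0.contDiffAt (Icc_mem_nhds (hx i).1 (hx i).2)
    have h2 : ContDiffAt ℝ (m : ℕ) (fun s => curveDeriv k ψ s q) (x i) := (contDiffAt_pi.1 h1) q
    exact ContDiffAt.comp (g := fun s => curveDeriv k ψ s q)
      (f := fun z : (Fin k → Fin k → Fin k → ℝ) × (Fin k → ℝ) => z.2 i) (b, x) h2 (by fun_prop)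

lemma aux_hasFDerivAt (k : ℕ) (ψ : ℝ → (Fin k → ℝ))
    (hs : ContDiffOn ℝ 1 ψ (Set.Icc 0 1)) (b : Fin k → Fin k → Fin k → ℝ) (x : Fin k → ℝ)
    (hx : ∀ i, x i ∈ Set.Ioo (0:ℝ) 1) :
    HasFDerivAt (fun x => auxPsi k ψ (b, x))
      (LinearMap.toContinuousLinearMap (Matrix.toLin' (auxM k ψ (b, x)))) x := by
  rw [hasFDerivAt_pi']
  intro p
  have h : ∀ i q, HasFDerivAt (fun x : Fin k → ℝ => b i p q * ψ (x i) q)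
      (b i p q • curveDeriv k ψ (x i) q • (ContinuousLinearMap.proj i : (Fin k → ℝ) →L[ℝ] ℝ)) x := by
    intro i q
    have hn := Icc_mem_nhds (hx i).1 (hx i).2
    have h1 : HasDerivAt ψ (curveDeriv k ψ (x i)) (x i) :=
      ((hs.differentiableOn (by simp) (x i) (mem_of_mem_nhds hn)).hasDerivWithinAt).hasDerivAt hn
    have h2 : HasDerivAt (fun s => ψ s q) (curveDeriv k ψ (x i) q) (x i) := (hasDerivAt_pi.1 h1) q
    have h3 : HasFDerivAt (fun x : Fin k → ℝ => x i)
      (ContinuousLinearMap.proj i : (Fin k → ℝ) →L[ℝ] ℝ) x := hasFDerivAt_apply i x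
    exact (h2.comp_hasFDerivAt x h3).const_mul (b i p q)
  have h' := HasFDerivAt.fun_sum (u := Finset.univ) (fun i _ =>
    HasFDerivAt.fun_sum (u := Finset.univ) (fun q _ => h i q))
  refine h'.congr_fderiv ?_
  ext e
  simp [auxM, Matrix.mulVec, dotProduct, Finset.sum_mul, mul_assoc]

lemma aux_inj (k : ℕ) (ψ : ℝ → (Fin k → ℝ))
    (hs : ContDiffOn ℝ 1 ψ (Set.Icc 0 1)) (b : Fin k → Fin k → Fin k → ℝ) (x : Fin k → ℝ)
    (hx : ∀ i, x i ∈ Set.Ioo (0:ℝ) 1) (hdet : (auxM k ψ (b, x)).det ≠ 0) :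
    Function.Injective (fun e => fderiv ℝ (auxPsi k ψ) (b, x) (0, e)) := by
  have h1 : HasFDerivAt (auxPsi k ψ) (fderiv ℝ (auxPsi k ψ) (b, x)) (b, x) :=
    ((aux_psi_contDiffAt k 1 ψ (by simpa using hs) b x hx).differentiableAt (by simp)).hasFDerivAt
  have h2 := HasFDerivAt.comp (g := auxPsi k ψ) x h1 (hasFDerivAt_prodMk_right b x)
  have h3 := h2.unique (aux_hasFDerivAt k ψ hs b x hx)
  have h4 : (fun e => fderiv ℝ (auxPsi k ψ) (b, x) (0, e)) = (auxM k ψ (b, x)).mulVec := by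
    ext e : 1
    have := congrArg (fun L : (Fin k → ℝ) →L[ℝ] (Fin k → ℝ) => L e) h3
    simpa using this
  rw [h4]
  exact Matrix.mulVec_injective_of_isUnit ((Matrix.isUnit_iff_isUnit_det _).2 hdet.isUnit)

/-- Decomposition of `(Ψ_a)_*(λ|_I)` into a part with a `C^m` density
with uniformly bounded `C^m` norm, plus an error part of mass less than `ε`, uniformly
over a compact set `Ω_A ⊆ A_k^k` on which `Ψ_a` is injective on `I` and `F_ψ ≠ 0` on `I`. -/
theorem stmt9 (k m : ℕ) (ψ : ℝ → (Fin k → ℝ)) (hψ : TotallyNonPlanar k ψ)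
    (hsmooth : ContDiffOn ℝ (m + 1 : ℕ) ψ (Set.Icc 0 1))
    (ΩA : Set (Fin k → Ak k)) (hΩA : IsCompact ΩA)
    (c d : Fin k → ℝ) (hcd : ∀ i, 0 ≤ c i ∧ c i ≤ d i ∧ d i ≤ 1)
    (hinj : ∀ a ∈ ΩA, Set.InjOn (PsiMap k ψ a) {x | ∀ i, x i ∈ Set.Icc (c i) (d i)})
    (hF : ∀ a ∈ ΩA, ∀ x ∈ {x : Fin k → ℝ | ∀ i, x i ∈ Set.Icc (c i) (d i)},
      Fpsi k ψ a x ≠ 0)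
    (ε : ℝ) (hε : 0 < ε) :
    ∃ C : ℝ, ∀ a ∈ ΩA, ∃ τ₁ τ₂ : Measure (Fin k → ℝ),
      Measure.map (PsiMap k ψ a)
          (volume.restrict {x : Fin k → ℝ | ∀ i, x i ∈ Set.Icc (c i) (d i)}) = τ₁ + τ₂ ∧
      (∃ g : (Fin k → ℝ) → ℝ, ContDiff ℝ (m : ℕ) g ∧ (∀ x, 0 ≤ g x) ∧
        τ₁ = volume.withDensity (fun x => ENNReal.ofReal (g x)) ∧
        ∀ i ≤ m, ∀ x, ‖iteratedFDeriv ℝ i g x‖ < C) ∧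
      τ₂ Set.univ < ENNReal.ofReal ε := by
  classical
  have hs1 : ContDiffOn ℝ 1 ψ (Set.Icc 0 1) := hψ.1
  set I : Set (Fin k → ℝ) := {x | ∀ i, x i ∈ Set.Icc (c i) (d i)} with hI
  set U : Set (Fin k → ℝ) := Set.univ.pi fun i => Set.Ioo (c i) (d i) with hU
  have hIIcc : I = Set.Icc c d := by
    ext x
    simp [hI, Pi.le_def, forall_and]
  have hUo : IsOpen U := isOpen_set_pi Set.finite_univ fun i _ => isOpen_Ioo
  have hIm : MeasurableSet I := hIIcc ▸ measurableSet_Icc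
  have hUI : U ⊆ I := fun x hx i => Set.Ioo_subset_Icc_self (hx i trivial)
  have hae : U =ᵐ[volume] I := by
    rw [hIIcc]
    exact Measure.univ_pi_Ioo_ae_eq_Icc
  have hIfin : volume I ≠ ⊤ := by
    rw [hIIcc]
    exact isCompact_Icc.measure_lt_top.ne
  have hUfin : volume U ≠ ⊤ := ne_top_of_le_ne_top hIfin (measure_mono hUI)
  have hU01 : ∀ x ∈ U, ∀ i, x i ∈ Set.Ioo (0:ℝ) 1 := fun x hx i =>
    ⟨(hcd i).1.trans_lt (hx i trivial).1, (hx i trivial).2.trans_le (hcd i).2.2⟩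
  obtain ⟨χ, L, hχc, hχ0, hχ1, hLc, hLU, hχL, hχε⟩ := aux_cutoff k U hUo hUfin ε hε
  set ι : (Fin k → Ak k) → (Fin k → Fin k → Fin k → ℝ) := fun a i p q => (a i).val p q with hι
  have hιc : Continuous ι := by
    refine continuous_pi fun i => continuous_pi fun p => continuous_pi fun q => ?_
    have h1 : Continuous (fun a : Fin k → Ak k => (a i).val) :=
      continuous_subtype_val.comp (continuous_apply i)
    exact (continuous_apply q).comp ((continuous_apply p).comp h1)
  have hΨ : ∀ a, PsiMap k ψ a = fun x => auxPsi k ψ (ι a, x) := by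
    intro a
    ext x p
    simp [PsiMap, auxPsi, hι, Matrix.mulVec, dotProduct]
  have hFM : ∀ a x, Fpsi k ψ a x = (auxM k ψ (ι a, x)).det := by
    intro a x
    simp [Fpsi, auxM, hι, Matrix.mulVec, dotProduct]
  set h : (Fin k → Fin k → Fin k → ℝ) × (Fin k → ℝ) → ℝ :=
    fun z => χ z.2 / |(auxM k ψ z).det| with hh
  set g : (Fin k → Fin k → Fin k → ℝ) → (Fin k → ℝ) → ℝ := fun b y =>
    if y ∈ (fun x => auxPsi k ψ (b, x)) '' U then
      h (b, Function.invFunOn (fun x => auxPsi k ψ (b, x)) U y) else 0 with hg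
  have hinjU : ∀ b ∈ ι '' ΩA, Set.InjOn (fun x => auxPsi k ψ (b, x)) U := by
    rintro _ ⟨a, ha, rfl⟩
    rw [← hΨ a]
    exact (hinj a ha).mono hUI
  have hdet : ∀ b ∈ ι '' ΩA, ∀ x ∈ U, (auxM k ψ (b, x)).det ≠ 0 := by
    rintro _ ⟨a, ha, rfl⟩ x hx
    rw [← hFM]
    exact hF a ha x (hUI hx)
  have hgU : ∀ b ∈ ι '' ΩA, ∀ x ∈ U, g b (auxPsi k ψ (b, x)) = h (b, x) := by
    intro b hb x hx
    have hmem : auxPsi k ψ (b, x) ∈ (fun x => auxPsi k ψ (b, x)) '' U := ⟨x, hx, rfl⟩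
    simp only [hg]
    rw [if_pos hmem]
    have e : Function.invFunOn (fun x => auxPsi k ψ (b, x)) U (auxPsi k ψ (b, x)) = x :=
      (hinjU b hb).leftInvOn_invFunOn hx
    rw [e]
  have hg0 : ∀ b, ∀ y, y ∉ (fun x => auxPsi k ψ (b, x)) '' U → g b y = 0 := by
    intro b y hy
    simp only [hg]
    rw [if_neg hy]
  have hgL : ∀ b ∈ ι '' ΩA, ∀ y, y ∉ (fun x => auxPsi k ψ (b, x)) '' L → g b y = 0 := by
    intro b hb y hy
    by_cases hyU : y ∈ (fun x => auxPsi k ψ (b, x)) '' U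
    · obtain ⟨x, hx, rfl⟩ := hyU
      have hxL : x ∉ L := fun hxL => hy ⟨x, hxL, rfl⟩
      show g b (auxPsi k ψ (b, x)) = 0
      rw [hgU b hb x hx, hh]
      simp [hχL x hxL]
    · exact hg0 b y hyU
  have hhc : ∀ b ∈ ι '' ΩA, ∀ x ∈ U, ContDiffAt ℝ (m : ℕ) h (b, x) := by
    intro b hb x hx
    have hd := hdet b hb x hx
    have h1 := aux_det_contDiffAt k m ψ hsmooth b x (hU01 x hx)
    have h2 : ContDiffAt ℝ (m : ℕ) (fun z => |(auxM k ψ z).det|) (b, x) :=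
      ContDiffAt.abs (n := (m : ℕ∞)) h1 hd
    have h3 : ContDiff ℝ (m : ℕ) χ := hχc.of_le (by exact_mod_cast le_top)
    exact ContDiffAt.div (h3.contDiffAt.comp (b, x) contDiffAt_snd) h2 (abs_ne_zero.2 hd)
  obtain ⟨C, hC⟩ := aux_global m (auxPsi k ψ) U hUo (ι '' ΩA) (hΩA.image hιc) h g hgU
    (fun b _ x hx => aux_psi_contDiffAt k (m + 1) ψ hsmooth b x (hU01 x hx)) hhc
    (fun b hb x hx => aux_inj k ψ hs1 b x (hU01 x hx) (hdet b hb x hx)) L hLc hLU hgL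
  refine ⟨C, fun a ha => ?_⟩
  have hb : ι a ∈ ι '' ΩA := ⟨a, ha, rfl⟩
  obtain ⟨hgc, hgC⟩ := hC (ι a) hb
  have hcont : ContinuousOn (PsiMap k ψ a) I := by
    unfold PsiMap
    apply continuousOn_finset_sum
    intro i _
    have h1 : ContinuousOn (fun x : Fin k → ℝ => ψ (x i)) I :=
      hs1.continuousOn.comp (continuous_apply i).continuousOn
        (fun x hx => ⟨(hcd i).1.trans (hx i).1, (hx i).2.trans (hcd i).2.2⟩)
    have h2 : Continuous (fun v : Fin k → ℝ => (a i).val.mulVec v) := by fun_prop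
    exact h2.comp_continuousOn h1
  have haem : AEMeasurable (PsiMap k ψ a) (volume.restrict I) := hcont.aemeasurable hIm
  have hχm : Measurable (fun x => ENNReal.ofReal (χ x)) :=
    hχc.continuous.measurable.ennreal_ofReal
  set μ₁ := (volume.restrict I).withDensity (fun x => ENNReal.ofReal (χ x)) with hμ₁
  set μ₂ := (volume.restrict I).withDensity (fun x => 1 - ENNReal.ofReal (χ x)) with hμ₂
  have hsum : volume.restrict I = μ₁ + μ₂ := by
    rw [hμ₁, hμ₂, ← withDensity_add_left hχm]
    have : ((fun x => ENNReal.ofReal (χ x)) + fun x => 1 - ENNReal.ofReal (χ x)) = 1 := by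
      ext x
      simp only [Pi.add_apply, Pi.one_apply]
      exact add_tsub_cancel_of_le (by simpa using hχ1 x)
    rw [this, withDensity_one]
  have haem1 : AEMeasurable (PsiMap k ψ a) μ₁ :=
    haem.mono_ac (withDensity_absolutelyContinuous _ _)
  have haem2 : AEMeasurable (PsiMap k ψ a) μ₂ :=
    haem.mono_ac (withDensity_absolutelyContinuous _ _)
  refine ⟨Measure.map (PsiMap k ψ a) μ₁, Measure.map (PsiMap k ψ a) μ₂, ?_,
    ⟨g (ι a), hgc, ?_, ?_, hgC⟩, ?_⟩
  · ext s hs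
    rw [Measure.map_apply_of_aemeasurable haem hs, Measure.add_apply,
      Measure.map_apply_of_aemeasurable haem1 hs, Measure.map_apply_of_aemeasurable haem2 hs,
      hsum, Measure.add_apply]
  · intro y
    simp only [hg]
    split_ifs
    · exact div_nonneg (hχ0 _) (abs_nonneg _)
    · exact le_rfl
  · have hdet' : ∀ x, (LinearMap.toContinuousLinearMap
        (Matrix.toLin' (auxM k ψ (ι a, x)))).det = (auxM k ψ (ι a, x)).det := by
      intro x
      rw [LinearMap.det_toContinuousLinearMap, LinearMap.det_toLin']
    refine aux_measure (PsiMap k ψ a)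
      (fun x => LinearMap.toContinuousLinearMap (Matrix.toLin' (auxM k ψ (ι a, x))))
      U I hUo.measurableSet hIm hUI ?_ ((hinj a ha).mono hUI) ?_ haem χ
      (fun x hx => hχL x fun hxL => hx (hLU hxL)) (g (ι a)) ?_ ?_
    · intro x hx
      rw [hΨ a]
      exact aux_hasFDerivAt k ψ hs1 (ι a) x (hU01 x hx)
    · intro x hx
      rw [hdet']
      exact hdet _ hb x hx
    · intro x hx
      rw [hdet', hΨ a]
      exact hgU _ hb x hx
    · intro y hy
      rw [hΨ a] at hy
      exact hg0 _ y hy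
  · rw [Measure.map_apply_of_aemeasurable haem2 MeasurableSet.univ, Set.preimage_univ, hμ₂,
      withDensity_apply _ MeasurableSet.univ, Measure.restrict_univ,
      ← Measure.restrict_congr_set hae]
    exact hχε
end

section
/- Let ψ : [0,1] → ℝ^k be totally non-planar and C^{m+1}, and let B ⊆ A_k^k be compact. Then for every ε > 0 there exist a constant C > 0 and, for every a ∈ B, positive measures τ_{1,a} and τ_{2,a} on ℝ^k such that: (1) (Ψ_a)_*λ_{[0,1]^k} = τ_{1,a} + τ_{2,a}; (2) τ_{2,a}(ℝ^k) < ε; (3) τ_{1,a} = g_a·λ_{ℝ^k} for some C^m function g_a : ℝ^k → ℝ; (4) ‖g_a‖_{C^m} < C. -/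
open MeasureTheory

namespace Row10

open Set Topology

lemma ae_prod_of {α β : Type*} [MeasurableSpace α] [MeasurableSpace β] (μ : Measure α)
    (ν : Measure β) [SFinite μ] [SFinite ν] (p : α × β → Prop) (hm : MeasurableSet {z | p z})
    (h : ∀ᵐ y ∂ν, ∀ᵐ x ∂μ, p (x, y)) : ∀ᵐ z ∂(μ.prod ν), p z := by
  rw [Measure.ae_prod_iff_ae_ae hm]
  exact (Measure.ae_ae_comm (p := fun x y => p (x, y)) hm).2 h

/-- Almost every choice of points gives independent vectors. -/
lemma ae_linearIndependent {k : ℕ} (φ : ℝ → (Fin k → ℝ)) (hφ : Continuous φ)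
    (μ : Measure ℝ) [SigmaFinite μ]
    (hnp : ∀ v : Fin k → ℝ, v ≠ 0 → ∀ᵐ s ∂μ, ∑ i, φ s i * v i ≠ 0) (n : ℕ) (hn : n ≤ k)
    (a : Fin n → Fin k → ℝ) (ha : ∀ i j, a i j ≠ 0) :
    ∀ᵐ x ∂(Measure.pi (fun _ : Fin n => μ)),
      LinearIndependent ℝ (fun i => a i * φ (x i)) := by
  induction n with
  | zero => exact Filter.Eventually.of_forall fun x => linearIndependent_empty_type
  | succ n ih =>
    have ih' := ih (by omega) (fun i => a i.succ) (fun i j => ha _ _)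
    have mp := measurePreserving_piFinSuccAbove (fun _ : Fin (n+1) => μ) 0
    have hopen : IsOpen {z : ℝ × (Fin n → ℝ) | LinearIndependent ℝ
        (Fin.cons (a 0 * φ z.1) (fun i : Fin n => a i.succ * φ (z.2 i)) :
          Fin (n+1) → Fin k → ℝ)} := by
      have hc : Continuous (fun z : ℝ × (Fin n → ℝ) =>
        (Fin.cons (a 0 * φ z.1) (fun i : Fin n => a i.succ * φ (z.2 i)) :
          Fin (n+1) → Fin k → ℝ)) := by
        refine continuous_pi fun i => ?_
        refine Fin.cases ?_ (fun i => ?_) i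
        · simp only [Fin.cons_zero]; fun_prop
        · simp only [Fin.cons_succ]; fun_prop
      exact (isOpen_setOfPred_linearIndependent (𝕜 := ℝ) (E := Fin k → ℝ) (ι := Fin (n+1))).preimage hc
    have key : ∀ᵐ z ∂(μ.prod (Measure.pi (fun _ : Fin n => μ))), LinearIndependent ℝ
        (Fin.cons (a 0 * φ z.1) (fun i : Fin n => a i.succ * φ (z.2 i)) :
          Fin (n+1) → Fin k → ℝ) := by
      refine ae_prod_of _ _ _ hopen.measurableSet ?_
      filter_upwards [ih'] with y hy
      have hlt : Submodule.span ℝ (range (fun i : Fin n => a i.succ * φ (y i))) < ⊤ := by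
        rw [lt_top_iff_ne_top]
        intro h
        have h1 := finrank_span_eq_card hy
        rw [h] at h1
        simp at h1
        omega
      obtain ⟨f, hf0, hf⟩ := Submodule.exists_le_ker_of_lt_top _ hlt
      set w : Fin k → ℝ := fun j => a 0 j * f (Pi.single j 1) with hw
      have hfw : ∀ u : Fin k → ℝ, f (a 0 * u) = ∑ j, u j * w j := by
        intro u
        rw [LinearMap.pi_apply_eq_sum_univ f]
        refine Finset.sum_congr rfl fun j _ => ?_
        have : (fun j' => if j = j' then (1:ℝ) else 0) = Pi.single j 1 := by
          ext j'; simp [Pi.single_apply, eq_comm]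
        simp only [this, hw, Pi.mul_apply, smul_eq_mul]; ring
      have hw0 : w ≠ 0 := by
        intro h
        apply hf0
        refine LinearMap.pi_ext' fun j => ?_
        ext
        have := congrFun h j
        simpa [hw, ha] using this
      filter_upwards [hnp w hw0] with s hs
      rw [linearIndependent_finCons]
      refine ⟨hy, fun hmem => hs ?_⟩
      rw [← hfw]
      exact hf hmem
    have := mp.quasiMeasurePreserving.ae key
    filter_upwards [this] with x hx
    convert hx using 1
    ext i j
    refine Fin.cases ?_ (fun i => ?_) i <;> simp [MeasurableEquiv.piFinSuccAbove, Fin.tail]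

section
variable {k : ℕ}

abbrev EE (k : ℕ) := (Fin k → Fin k → ℝ) × (Fin k → ℝ)

/-- The family of maps. -/
def Psi (ψ : ℝ → Fin k → ℝ) (z : EE k) : Fin k → ℝ := fun j => ∑ i, z.1 i j * ψ (z.2 i) j

def MM (φ : ℝ → Fin k → ℝ) (z : EE k) : Matrix (Fin k) (Fin k) ℝ :=
  Matrix.of fun j i => z.1 i j * φ (z.2 i) j

noncomputable def JJ (φ : ℝ → Fin k → ℝ) (z : EE k) : ℝ := (MM φ z).det

def OO (φ : ℝ → Fin k → ℝ) : Set (EE k) := {z | (∀ i, z.2 i ∈ Ioo (0:ℝ) 1) ∧ JJ φ z ≠ 0}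

lemma JJ_cont (φ : ℝ → Fin k → ℝ) (hφ : Continuous φ) : Continuous (JJ φ) := by
  unfold JJ
  apply Continuous.matrix_det
  refine continuous_matrix fun j i => ?_
  simp only [MM, Matrix.of_apply]
  fun_prop

lemma OO_open (φ : ℝ → Fin k → ℝ) (hφ : Continuous φ) : IsOpen (OO φ) := by
  have : OO φ = (⋂ i, {z : EE k | z.2 i ∈ Ioo (0:ℝ) 1}) ∩ {z | JJ φ z ≠ 0} := by
    ext z; simp [OO]
  rw [this]
  refine IsOpen.inter (isOpen_iInter_of_finite fun i => ?_) ?_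
  · exact isOpen_Ioo.preimage (by fun_prop)
  · exact isOpen_ne_fun (JJ_cont φ hφ) continuous_const

lemma Psi_contDiffAt {n : WithTop ℕ∞} (ψ : ℝ → Fin k → ℝ)
    (hψ : ∀ s ∈ Ioo (0:ℝ) 1, ContDiffAt ℝ n ψ s)
    (z : EE k) (hz : ∀ i, z.2 i ∈ Ioo (0:ℝ) 1) : ContDiffAt ℝ n (Psi ψ) z := by
  rw [contDiffAt_pi]
  intro j
  unfold Psi
  refine ContDiffAt.sum fun i _ => ContDiffAt.mul (by fun_prop) ?_
  have h1 : ContDiffAt ℝ n (fun s => ψ s j) (z.2 i) := (contDiffAt_pi.1 (hψ _ (hz i))) j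
  exact ContDiffAt.comp z (g := fun s => ψ s j) (f := fun z : EE k => z.2 i) h1 (by fun_prop)

lemma JJ_contDiffAt {n : WithTop ℕ∞} (φ : ℝ → Fin k → ℝ)
    (hφ : ∀ s ∈ Ioo (0:ℝ) 1, ContDiffAt ℝ n φ s)
    (z : EE k) (hz : ∀ i, z.2 i ∈ Ioo (0:ℝ) 1) : ContDiffAt ℝ n (JJ φ) z := by
  unfold JJ
  simp only [Matrix.det_apply, MM, Matrix.of_apply]
  refine ContDiffAt.sum fun σ _ => ContDiffAt.const_smul _ ?_
  refine contDiffAt_prod fun i _ => ContDiffAt.mul (by fun_prop) ?_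
  have h1 : ContDiffAt ℝ n (fun s => φ s (σ i)) (z.2 i) := (contDiffAt_pi.1 (hφ _ (hz i))) _
  exact ContDiffAt.comp z (g := fun s => φ s (σ i)) (f := fun z : EE k => z.2 i) h1 (by fun_prop)

noncomputable def DD (φ : ℝ → Fin k → ℝ) (z : EE k) : (Fin k → ℝ) →L[ℝ] (Fin k → ℝ) :=
  LinearMap.toContinuousLinearMap (Matrix.toLin' (MM φ z))

lemma DD_det (φ : ℝ → Fin k → ℝ) (z : EE k) : (DD φ z).det = JJ φ z := by
  simp [DD, JJ, ContinuousLinearMap.det]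

lemma DD_inj (φ : ℝ → Fin k → ℝ) (z : EE k) (hz : JJ φ z ≠ 0) (h : Fin k → ℝ)
    (hh : DD φ z h = 0) : h = 0 := by
  exact Matrix.eq_zero_of_mulVec_eq_zero hz hh

lemma Psi_hasFDerivAt (ψ φ : ℝ → Fin k → ℝ)
    (hd : ∀ s ∈ Ioo (0:ℝ) 1, HasDerivAt ψ (φ s) s) (z : EE k) (hz : ∀ i, z.2 i ∈ Ioo (0:ℝ) 1) :
    HasFDerivAt (fun x => Psi ψ (z.1, x)) (DD φ z) z.2 := by
  rw [hasFDerivAt_pi']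
  intro j
  have h1 : ∀ i, HasFDerivAt (fun x : Fin k → ℝ => z.1 i j * ψ (x i) j)
      (z.1 i j • φ (z.2 i) j • (ContinuousLinearMap.proj i : (Fin k → ℝ) →L[ℝ] ℝ)) z.2 := by
    intro i
    have h2 : HasDerivAt (fun s => ψ s j) (φ (z.2 i) j) (z.2 i) :=
      (hasDerivAt_pi.1 (hd _ (hz i))) j
    have h3 : HasFDerivAt (fun x : Fin k → ℝ => x i)
      (ContinuousLinearMap.proj i : (Fin k → ℝ) →L[ℝ] ℝ) z.2 := hasFDerivAt_apply i z.2
    exact (h2.comp_hasFDerivAt z.2 h3).const_mul _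
  have h4 := HasFDerivAt.fun_sum (u := Finset.univ) fun i _ => h1 i
  refine h4.congr_fderiv ?_
  ext h
  simp [DD, MM, Matrix.mulVec, dotProduct]
  exact Finset.sum_congr rfl fun i _ => by ring

/-- The map with parameters. -/
def FF (ψ : ℝ → Fin k → ℝ) (z : EE k) : EE k := (z.1, Psi ψ z)

lemma FF_equiv (ψ φ : ℝ → Fin k → ℝ) {n : WithTop ℕ∞} (hn : n ≠ 0)
    (hψ : ∀ s ∈ Ioo (0:ℝ) 1, ContDiffAt ℝ n ψ s)
    (hd : ∀ s ∈ Ioo (0:ℝ) 1, HasDerivAt ψ (φ s) s) (z : EE k) (hz : z ∈ OO φ) :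
    ContDiffAt ℝ n (FF ψ) z ∧
    ∃ f' : EE k ≃L[ℝ] EE k, HasFDerivAt (FF ψ) (f' : EE k →L[ℝ] EE k) z := by
  have hP := Psi_contDiffAt ψ hψ z hz.1
  refine ⟨ContDiffAt.prodMk (by fun_prop) hP, ?_⟩
  have hPd := (hP.differentiableAt hn).hasFDerivAt
  set Q := fderiv ℝ (Psi ψ) z
  have hF : HasFDerivAt (FF ψ) ((ContinuousLinearMap.fst ℝ _ _).prod Q) z :=
    HasFDerivAt.prodMk hasFDerivAt_fst hPd
  have hQ : ∀ h, Q (0, h) = DD φ z h := by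
    intro h
    have h1 : HasFDerivAt (fun x => Psi ψ (z.1, x)) (Q.comp (ContinuousLinearMap.inr ℝ _ _)) z.2 :=
      HasFDerivAt.comp z.2 (g := Psi ψ) hPd (hasFDerivAt_prodMk_right z.1 z.2)
    have := h1.unique (Psi_hasFDerivAt ψ φ hd z hz.1)
    rw [← this]; simp
  have hinj : Function.Injective ((ContinuousLinearMap.fst ℝ _ _).prod Q : EE k →ₗ[ℝ] EE k) := by
    rw [← LinearMap.ker_eq_bot, LinearMap.ker_eq_bot']
    rintro ⟨α, h⟩ hh
    have h1 : α = 0 := congrArg Prod.fst hh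
    subst h1
    have h2 : Q (0, h) = 0 := congrArg Prod.snd hh
    rw [hQ] at h2
    rw [DD_inj φ z hz.2 h h2]; rfl
  refine ⟨(LinearEquiv.ofInjectiveEndo _ hinj).toContinuousLinearEquiv, ?_⟩
  convert hF using 1
  ext x <;> rfl

end

lemma local_piece {k m : ℕ} (ψ φ : ℝ → Fin k → ℝ) (hψc : Continuous ψ) (hφc : Continuous φ)
    (hψ : ∀ s ∈ Ioo (0:ℝ) 1, ContDiffAt ℝ (m + 1 : ℕ) ψ s)
    (hφ : ∀ s ∈ Ioo (0:ℝ) 1, ContDiffAt ℝ m φ s)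
    (hd : ∀ s ∈ Ioo (0:ℝ) 1, HasDerivAt ψ (φ s) s) (z₀ : EE k) (hz₀ : z₀ ∈ OO φ) :
    ∃ U : Set (EE k), IsOpen U ∧ z₀ ∈ U ∧ U ⊆ OO φ ∧
      ∀ χ : EE k → ℝ, ContDiff ℝ m χ → (∀ z, 0 ≤ χ z) → HasCompactSupport χ → tsupport χ ⊆ U →
        ∃ G : EE k → ℝ, ContDiff ℝ m G ∧ HasCompactSupport G ∧ (∀ z, 0 ≤ G z) ∧
          ∀ a, ∀ T : Set (Fin k → ℝ), MeasurableSet T →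
            ∫⁻ x in (fun x => Psi ψ (a, x)) ⁻¹' T, ENNReal.ofReal (χ (a, x)) =
              ∫⁻ y in T, ENNReal.ofReal (G (a, y)) := by
  classical
  have hn : ((m + 1 : ℕ) : WithTop ℕ∞) ≠ 0 := by exact_mod_cast Nat.succ_ne_zero m
  have hFF := fun z hz => FF_equiv ψ φ hn hψ hd z hz
  obtain ⟨hc0, f0, hf0⟩ := hFF z₀ hz₀
  set e0 := hc0.toOpenPartialHomeomorph (FF ψ) hf0 hn with he0
  have he0c : ∀ z, e0 z = FF ψ z := fun z => rfl
  have hOo := OO_open φ hφc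
  set e := e0.restrOpen (OO φ) hOo with he
  have hec : ∀ z, e z = FF ψ z := fun z => rfl
  have hes : e.source = e0.source ∩ OO φ := e0.restrOpen_source _ _
  have hsO : e.source ⊆ OO φ := by rw [hes]; exact inter_subset_right
  refine ⟨e.source, e.open_source, ?_, hsO, ?_⟩
  · rw [hes]; exact ⟨hc0.mem_toOpenPartialHomeomorph_source hf0 hn, hz₀⟩
  intro χ hχ hχ0 hχc hχs
  have hsymm : ∀ z ∈ e.target, ContDiffAt ℝ m e.symm z := by
    intro z hz
    obtain ⟨h1, f', h2⟩ := hFF (e.symm z) (hsO (e.map_target hz))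
    have := e.contDiffAt_symm hz (f₀' := f') h2 h1
    exact this.of_le (by exact_mod_cast Nat.le_succ m)
  set G : EE k → ℝ := fun z => if z ∈ e.target then χ (e.symm z) * |JJ φ (e.symm z)|⁻¹ else 0
    with hG
  have hGon : ∀ z ∈ e.source, G (FF ψ z) = χ z * |JJ φ z|⁻¹ := by
    intro z hz
    have h1 : FF ψ z ∈ e.target := e.map_source hz
    have h2 : e.symm (FF ψ z) = z := e.left_inv hz
    simp only [hG, if_pos h1, h2]
  have hK : IsCompact (e '' tsupport χ) :=
    IsCompact.image_of_continuousOn hχc (e.continuousOn.mono hχs)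
  have hGK : ∀ z, z ∉ e '' tsupport χ → G z = 0 := by
    intro z hz
    by_cases ht : z ∈ e.target
    · simp only [hG, if_pos ht]
      have : χ (e.symm z) = 0 := by
        apply image_eq_zero_of_notMem_tsupport
        intro h
        exact hz ⟨_, h, e.right_inv ht⟩
      rw [this, zero_mul]
    · simp only [hG, if_neg ht]
  refine ⟨G, ?_, HasCompactSupport.intro hK hGK, ?_, ?_⟩
  · rw [contDiff_iff_contDiffAt]
    intro z
    by_cases hz : z ∈ e '' tsupport χ
    · have ht : z ∈ e.target := by
        obtain ⟨w, hw, rfl⟩ := hz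
        exact e.map_source (hχs hw)
      have hmem := hsO (e.map_target ht)
      have hJ : ContDiffAt ℝ m (fun w => |JJ φ (e.symm w)|⁻¹) z := by
        have h1 : ContDiffAt ℝ m (fun w => JJ φ (e.symm w)) z :=
          ContDiffAt.comp z (g := JJ φ) (JJ_contDiffAt φ hφ _ hmem.1) (hsymm z ht)
        exact (h1.abs hmem.2).inv (abs_ne_zero.2 hmem.2)
      have h2 : ContDiffAt ℝ m (fun w => χ (e.symm w) * |JJ φ (e.symm w)|⁻¹) z :=
        (ContDiffAt.comp z hχ.contDiffAt (hsymm z ht)).mul hJ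
      refine h2.congr_of_eventuallyEq ?_
      filter_upwards [e.open_target.mem_nhds ht] with w hw
      simp only [hG, if_pos hw]
    · have : G =ᶠ[𝓝 z] fun _ => 0 := by
        filter_upwards [hK.isClosed.isOpen_compl.mem_nhds hz] with w hw
        exact hGK w hw
      exact contDiffAt_const.congr_of_eventuallyEq this
  · intro z
    simp only [hG]
    split_ifs
    · exact mul_nonneg (hχ0 _) (inv_nonneg.2 (abs_nonneg _))
    · exact le_rfl
  intro a T hT
  set f : (Fin k → ℝ) → (Fin k → ℝ) := fun x => Psi ψ (a, x) with hf
  have hfc : Continuous f := by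
    refine continuous_pi fun j => ?_
    simp only [hf, Psi]
    fun_prop
  set S : Set (Fin k → ℝ) := {x | (a, x) ∈ e.source} with hS
  have hSo : IsOpen S := e.open_source.preimage (by fun_prop)
  have hinj : InjOn f S := by
    intro x hx y hy hxy
    have h1 : FF ψ (a, x) = FF ψ (a, y) := Prod.ext rfl hxy
    have := e.injOn hx hy h1
    exact congrArg Prod.snd this
  have hder : ∀ x ∈ S, HasFDerivWithinAt f (DD φ (a, x)) S x := fun x hx =>
    (Psi_hasFDerivAt ψ φ hd (a, x) (hsO hx).1).hasFDerivWithinAt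
  have hcv := lintegral_image_eq_lintegral_abs_det_fderiv_mul volume hSo.measurableSet hder hinj
    (T.indicator (fun y => ENNReal.ofReal (G (a, y))))
  have hL : ∫⁻ x in f ⁻¹' T, ENNReal.ofReal (χ (a, x)) =
      ∫⁻ x in S, ENNReal.ofReal |(DD φ (a, x)).det| *
        T.indicator (fun y => ENNReal.ofReal (G (a, y))) (f x) := by
    rw [← lintegral_indicator (hfc.measurable hT), ← lintegral_indicator hSo.measurableSet]
    refine lintegral_congr fun x => ?_
    by_cases hx : x ∈ S
    · rw [indicator_of_mem hx]
      by_cases hxT : f x ∈ T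
      · rw [indicator_of_mem (show x ∈ f ⁻¹' T from hxT), indicator_of_mem hxT, DD_det]
        have h1 : G (a, f x) = χ (a, x) * |JJ φ (a, x)|⁻¹ := hGon (a, x) hx
        rw [h1, ← ENNReal.ofReal_mul (abs_nonneg _)]
        have h2 : |JJ φ (a, x)| ≠ 0 := abs_ne_zero.2 (hsO hx).2
        congr 1
        field_simp
      · rw [indicator_of_notMem (show x ∉ f ⁻¹' T from hxT), indicator_of_notMem hxT, mul_zero]
    · rw [indicator_of_notMem hx]
      have : χ (a, x) = 0 := image_eq_zero_of_notMem_tsupport fun h => hx (hχs h)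
      simp [indicator, this]
  have hR : ∫⁻ y in T, ENNReal.ofReal (G (a, y)) =
      ∫⁻ y in f '' S, T.indicator (fun y => ENNReal.ofReal (G (a, y))) y := by
    have him : MeasurableSet (f '' S) :=
      measurable_image_of_fderivWithin hSo.measurableSet hder hinj
    rw [← lintegral_indicator hT, ← lintegral_indicator him]
    refine lintegral_congr fun y => ?_
    by_cases hy : y ∈ f '' S
    · rw [indicator_of_mem hy]
    · rw [indicator_of_notMem hy]
      have : G (a, y) = 0 := by
        apply hGK
        rintro ⟨⟨b, x⟩, hw, hwe⟩
        have h1 : b = a := congrArg Prod.fst hwe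
        subst h1
        exact hy ⟨x, hχs hw, congrArg Prod.snd hwe⟩
      simp [indicator, this]
  rw [hL, hR, hcv]

/-- Gluing the local pieces by a partition of unity. -/
lemma glue {k m : ℕ} (ψ φ : ℝ → Fin k → ℝ) (hψc : Continuous ψ) (hφc : Continuous φ)
    (hψ : ∀ s ∈ Ioo (0:ℝ) 1, ContDiffAt ℝ (m + 1 : ℕ) ψ s)
    (hφ : ∀ s ∈ Ioo (0:ℝ) 1, ContDiffAt ℝ m φ s)
    (hd : ∀ s ∈ Ioo (0:ℝ) 1, HasDerivAt ψ (φ s) s) (K : Set (EE k)) (hK : IsCompact K)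
    (hKO : K ⊆ OO φ) :
    ∃ χ : EE k → ℝ, Continuous χ ∧ (∀ z, 0 ≤ χ z) ∧ (∀ z, χ z ≤ 1) ∧ (∀ z ∈ K, χ z = 1) ∧
        (∀ z, z ∉ OO φ → χ z = 0) ∧
        ∃ G : EE k → ℝ, ContDiff ℝ m G ∧ HasCompactSupport G ∧ (∀ z, 0 ≤ G z) ∧
          ∀ a, ∀ T : Set (Fin k → ℝ), MeasurableSet T →
            ∫⁻ x in (fun x => Psi ψ (a, x)) ⁻¹' T, ENNReal.ofReal (χ (a, x)) =
              ∫⁻ y in T, ENNReal.ofReal (G (a, y)) := by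
  classical
  choose! U hUo hUm hUO hU using fun z hz =>
    local_piece ψ φ hψc hφc hψ hφ hd z hz
  obtain ⟨t, ht⟩ := hK.elim_nhds_subcover (fun z => U z ∩ Metric.ball z 1) (fun z hz =>
    ((hUo z (hKO hz)).inter Metric.isOpen_ball).mem_nhds
      ⟨hUm z (hKO hz), Metric.mem_ball_self one_pos⟩)
  have htO : ∀ i : t, (i : EE k) ∈ OO φ := fun i => hKO (ht.1 i i.2)
  obtain ⟨f, hf⟩ := SmoothPartitionOfUnity.exists_isSubordinate (modelWithCornersSelf ℝ (EE k))
    hK.isClosed (fun i : t => U i ∩ Metric.ball (i : EE k) 1)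
    (fun i => (hUo i (htO i)).inter Metric.isOpen_ball) (by
      intro z hz
      have := ht.2 hz
      simp only [mem_iUnion] at this ⊢
      obtain ⟨i, hi, h⟩ := this
      exact ⟨⟨i, hi⟩, h⟩)
  have hsm : ∀ i, ContDiff ℝ m (f i) := fun i =>
    (f i).contMDiff.contDiff.of_le (by exact_mod_cast le_top)
  have hcs : ∀ i, HasCompactSupport (f i) := by
    intro i
    refine Metric.isCompact_of_isClosed_isBounded (isClosed_tsupport _) ?_
    exact (Metric.isBounded_ball (x := (i : EE k)) (r := 1)).subset
      ((hf i).trans inter_subset_right)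
  choose G hG1 hG2 hG3 hG4 using fun i : t => hU i (htO i) (f i) (hsm i) (f.nonneg i) (hcs i)
    ((hf i).trans inter_subset_left)
  have hsum : ∀ z, ∑ᶠ i, f i z = ∑ i, f i z := fun z => finsum_eq_sum_of_fintype _
  refine ⟨fun z => ∑ i, f i z, ?_, ?_, ?_, ?_, ?_, fun z => ∑ i, G i z, ?_, ?_, ?_, ?_⟩
  · exact continuous_finsetSum _ fun i _ => (hsm i).continuous
  · exact fun z => Finset.sum_nonneg fun i _ => f.nonneg i z
  · intro z; exact (hsum z).symm.trans_le (f.sum_le_one z)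
  · intro z hz; exact (hsum z).symm.trans (f.sum_eq_one hz)
  · intro z hz
    refine Finset.sum_eq_zero fun i _ => ?_
    apply image_eq_zero_of_notMem_tsupport
    exact fun h => hz (hUO i (htO i) (hf i h).1)
  · exact ContDiff.sum fun i _ => hG1 i
  · refine HasCompactSupport.intro (K := ⋃ i, tsupport (G i)) (isCompact_iUnion fun i => hG2 i) ?_
    intro z hz
    simp only [mem_iUnion, not_exists] at hz
    exact Finset.sum_eq_zero fun i _ => image_eq_zero_of_notMem_tsupport (hz i)
  · exact fun z => Finset.sum_nonneg fun i _ => hG3 i z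
  · intro a T hT
    have e1 : ∀ x, ENNReal.ofReal (∑ i, f i (a, x)) = ∑ i, ENNReal.ofReal (f i (a, x)) :=
      fun x => ENNReal.ofReal_sum_of_nonneg fun i _ => f.nonneg i _
    have e2 : ∀ x, ENNReal.ofReal (∑ i, G i (a, x)) = ∑ i, ENNReal.ofReal (G i (a, x)) :=
      fun x => ENNReal.ofReal_sum_of_nonneg fun i _ => hG3 i _
    simp only [e1, e2]
    rw [lintegral_finsetSum, lintegral_finsetSum]
    · exact Finset.sum_congr rfl fun i _ => hG4 i a T hT
    · intro i _
      have := (hG1 i).continuous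
      exact (ENNReal.continuous_ofReal.comp (this.comp (by fun_prop))).measurable
    · intro i _
      have := (hsm i).continuous
      exact (ENNReal.continuous_ofReal.comp (this.comp (by fun_prop))).measurable

lemma slice_bound {k m : ℕ} (G : EE k → ℝ) (hG : ContDiff ℝ m G) (hc : HasCompactSupport G) :
    ∃ C > 0, ∀ a, ContDiff ℝ m (fun y => G (a, y)) ∧
      ∀ i ≤ m, ∀ y, ‖iteratedFDeriv ℝ i (fun y => G (a, y)) y‖ < C := by
  have h1 : ∀ i : ℕ, ∃ C, i ≤ m → ∀ z, ‖iteratedFDeriv ℝ i G z‖ ≤ C := by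
    intro i
    by_cases hi : i ≤ m
    · obtain ⟨C, hC⟩ := (hc.iteratedFDeriv (𝕜 := ℝ) i).exists_bound_of_continuous
        (hG.continuous_iteratedFDeriv (by exact_mod_cast hi))
      exact ⟨C, fun _ => hC⟩
    · exact ⟨0, fun h => absurd h hi⟩
  choose C hC using h1
  set N := ‖ContinuousLinearMap.inr ℝ (Fin k → Fin k → ℝ) (Fin k → ℝ)‖ with hN
  refine ⟨∑ i ∈ Finset.range (m+1), |C i| * N ^ i + 1, ?_, fun a => ⟨?_, ?_⟩⟩
  · have : 0 ≤ ∑ i ∈ Finset.range (m+1), |C i| * N ^ i :=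
      Finset.sum_nonneg fun i _ => by positivity
    linarith
  · exact hG.comp (by fun_prop)
  intro i hi y
  set G' : EE k → ℝ := fun z => G ((a, 0) + z)
  have hG' : ContDiff ℝ m G' := hG.comp (by fun_prop)
  have e1 : (fun y => G (a, y)) = G' ∘ (ContinuousLinearMap.inr ℝ (Fin k → Fin k → ℝ) (Fin k → ℝ)) := by
    ext y; simp [G']
  rw [e1, ContinuousLinearMap.iteratedFDeriv_comp_right _ hG' y (by exact_mod_cast hi)]
  refine lt_of_le_of_lt (ContinuousMultilinearMap.norm_compContinuousLinearMap_le _ _) ?_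
  rw [Finset.prod_const, Finset.card_univ, Fintype.card_fin, iteratedFDeriv_comp_add_left]
  have h2 : ‖iteratedFDeriv ℝ i G ((a, 0) + (ContinuousLinearMap.inr ℝ _ _) y)‖ * N ^ i
      ≤ |C i| * N ^ i := by
    gcongr
    exact (hC i hi _).trans (le_abs_self _)
  have h3 : |C i| * N ^ i ≤ ∑ i ∈ Finset.range (m+1), |C i| * N ^ i :=
    Finset.single_le_sum (f := fun i => |C i| * N ^ i) (fun i _ => by positivity)
      (Finset.mem_range.2 (by omega))
  exact lt_of_le_of_lt (h2.trans h3) (lt_add_one _)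

/-- The local version of the main statement. -/
lemma main_local {k m : ℕ} (ψ φ : ℝ → Fin k → ℝ) (hψc : Continuous ψ) (hφc : Continuous φ)
    (hψ : ∀ s ∈ Ioo (0:ℝ) 1, ContDiffAt ℝ (m + 1 : ℕ) ψ s)
    (hφ : ∀ s ∈ Ioo (0:ℝ) 1, ContDiffAt ℝ m φ s)
    (hd : ∀ s ∈ Ioo (0:ℝ) 1, HasDerivAt ψ (φ s) s)
    (hnp : ∀ v : Fin k → ℝ, v ≠ 0 →
      ∀ᵐ s ∂(volume.restrict (Icc (0:ℝ) 1)), ∑ i, φ s i * v i ≠ 0)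
    (ε : ℝ) (hε : 0 < ε) (a₀ : Fin k → Fin k → ℝ) (ha₀ : ∀ i j, a₀ i j ≠ 0) :
    ∃ C > (0:ℝ), ∀ᶠ a in 𝓝 a₀, ∃ τ₁ τ₂ : Measure (Fin k → ℝ),
      Measure.map (fun x => Psi ψ (a, x))
          (volume.restrict {x : Fin k → ℝ | ∀ i, x i ∈ Set.Icc (0:ℝ) 1}) = τ₁ + τ₂ ∧
      τ₂ Set.univ < ENNReal.ofReal ε ∧
      (∃ g : (Fin k → ℝ) → ℝ, ContDiff ℝ (m : ℕ) g ∧ (∀ x, 0 ≤ g x) ∧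
        τ₁ = volume.withDensity (fun x => ENNReal.ofReal (g x)) ∧
        ∀ i ≤ m, ∀ x, ‖iteratedFDeriv ℝ i g x‖ < C) := by
  set Q : Set (Fin k → ℝ) := {x | ∀ i, x i ∈ Icc (0:ℝ) 1} with hQ
  have hQpi : Q = Set.univ.pi (fun _ => Icc (0:ℝ) 1) := by
    ext x; simp only [hQ, Set.mem_univ_pi]; rfl
  have hQm : MeasurableSet Q := by
    rw [hQpi]; exact MeasurableSet.univ_pi fun _ => measurableSet_Icc
  set μ := volume.restrict Q with hμ
  have hμpi : μ = Measure.pi (fun _ : Fin k => volume.restrict (Icc (0:ℝ) 1)) := by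
    rw [hμ, hQpi, volume_pi, Measure.restrict_pi_pi]
  have hfin : IsFiniteMeasure μ := by rw [hμpi]; infer_instance
  set O : Set (Fin k → ℝ) := {x | (a₀, x) ∈ OO φ} with hO
  have hOo : IsOpen O := (OO_open φ hφc).preimage (by fun_prop)
  have hae : ∀ᵐ x ∂μ, x ∈ O := by
    have h1 : ∀ᵐ x ∂μ, JJ φ (a₀, x) ≠ 0 := by
      rw [hμpi]
      filter_upwards [ae_linearIndependent φ hφc _ hnp k le_rfl a₀ ha₀] with x hx
      have h2 : LinearIndependent ℝ (MM φ (a₀, x)).col := hx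
      rw [Matrix.linearIndependent_cols_iff_isUnit, Matrix.isUnit_iff_isUnit_det] at h2
      exact h2.ne_zero
    have h2 : ∀ᵐ x ∂μ, ∀ i, x i ∈ Ioo (0:ℝ) 1 := by
      rw [ae_all_iff]
      intro i
      rw [hμpi]
      have h3 : ∀ᵐ s ∂(volume.restrict (Icc (0:ℝ) 1)), s ∈ Ioo (0:ℝ) 1 := by
        rw [← Measure.restrict_congr_set Ioo_ae_eq_Icc]
        exact ae_restrict_mem measurableSet_Ioo
      exact (Measure.quasiMeasurePreserving_eval (μ := fun _ : Fin k =>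
        volume.restrict (Icc (0:ℝ) 1)) i).ae h3
    filter_upwards [h1, h2] with x hx1 hx2 using ⟨hx2, hx1⟩
  obtain ⟨K, hKO, hK, hKlt⟩ := hOo.measurableSet.exists_isCompact_sdiff_lt (μ := μ)
    (measure_ne_top μ O) (ε := ENNReal.ofReal ε) (by simpa using hε)
  have hKc : μ Kᶜ < ENNReal.ofReal ε := by
    refine lt_of_le_of_lt (measure_mono_ae ?_) hKlt
    filter_upwards [hae] with x hx hxK using ⟨hx, hxK⟩
  obtain ⟨χ, hχc, hχ0, hχ1, hχK, hχO, G, hG1, hG2, hG3, hG4⟩ :=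
    glue ψ φ hψc hφc hψ hφ hd ((fun x => (a₀, x)) '' K) (hK.image (by fun_prop))
      (by rintro _ ⟨x, hx, rfl⟩; exact hKO hx)
  obtain ⟨C, hC0, hC⟩ := slice_bound G hG1 hG2
  refine ⟨C, hC0, ?_⟩
  have hint : ∀ a, Integrable (fun x => 1 - χ (a, x)) μ := by
    intro a
    refine Integrable.of_bound (C := 1) ?_ (Filter.Eventually.of_forall fun x => ?_)
    · exact Continuous.aestronglyMeasurable (by fun_prop)
    · rw [Real.norm_eq_abs, abs_le]
      constructor <;> linarith [hχ0 (a, x), hχ1 (a, x)]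
  have hcont : Continuous (fun a => ∫ x, (1 - χ (a, x)) ∂μ) := by
    refine continuous_of_dominated (bound := fun _ => 1) ?_ ?_ ?_ ?_
    · exact fun a => (hint a).aestronglyMeasurable
    · refine fun a => Filter.Eventually.of_forall fun x => ?_
      rw [Real.norm_eq_abs, abs_le]
      constructor <;> linarith [hχ0 (a, x), hχ1 (a, x)]
    · exact integrable_const _
    · exact Filter.Eventually.of_forall fun x => by fun_prop
  have hlin : ∀ a, ENNReal.ofReal (∫ x, (1 - χ (a, x)) ∂μ) =
      ∫⁻ x, ENNReal.ofReal (1 - χ (a, x)) ∂μ := fun a =>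
    ofReal_integral_eq_lintegral_ofReal (hint a)
      (Filter.Eventually.of_forall fun x => by simpa using hχ1 (a, x))
  have h0 : ∫ x, (1 - χ (a₀, x)) ∂μ < ε := by
    rw [← ENNReal.ofReal_lt_ofReal_iff hε, hlin]
    refine lt_of_le_of_lt ?_ hKc
    rw [← lintegral_indicator_one hK.measurableSet.compl]
    refine lintegral_mono fun x => ?_
    by_cases hx : x ∈ K
    · simp [hχK _ ⟨x, hx, rfl⟩]
    · rw [indicator_of_mem (show x ∈ Kᶜ from hx)]
      simp only [Pi.one_apply]
      exact ENNReal.ofReal_le_one.2 (by linarith [hχ0 (a₀, x)])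
  filter_upwards [hcont.continuousAt.eventually_lt_const h0] with a ha
  have hfc : Continuous (fun x => Psi ψ (a, x)) := by
    refine continuous_pi fun j => ?_
    simp only [Psi]
    fun_prop
  have hm1 : Measurable (fun x => ENNReal.ofReal (χ (a, x))) :=
    (ENNReal.continuous_ofReal.comp (hχc.comp (by fun_prop))).measurable
  refine ⟨volume.withDensity (fun x => ENNReal.ofReal (G (a, x))),
    Measure.map (fun x => Psi ψ (a, x)) (μ.withDensity fun x => ENNReal.ofReal (1 - χ (a, x))),
    ?_, ?_, fun y => G (a, y), (hC a).1, fun y => hG3 _, rfl, (hC a).2⟩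
  · ext T hT
    have hpre := hfc.measurable hT
    rw [Measure.add_apply, Measure.map_apply hfc.measurable hT,
      Measure.map_apply hfc.measurable hT, withDensity_apply _ hT, withDensity_apply _ hpre,
      ← hG4 a T hT]
    have h5 : ∫⁻ x in (fun x => Psi ψ (a, x)) ⁻¹' T, ENNReal.ofReal (χ (a, x)) =
        ∫⁻ x in (fun x => Psi ψ (a, x)) ⁻¹' T, ENNReal.ofReal (χ (a, x)) ∂μ := by
      rw [hμ, Measure.restrict_restrict hpre, ← lintegral_indicator hpre,
        ← lintegral_indicator (hpre.inter hQm)]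
      refine lintegral_congr fun x => ?_
      by_cases hx : x ∈ Q
      · by_cases hxT : x ∈ (fun x => Psi ψ (a, x)) ⁻¹' T
        · rw [indicator_of_mem hxT, indicator_of_mem (Set.mem_inter hxT hx)]
        · rw [indicator_of_notMem hxT, indicator_of_notMem fun h => hxT h.1]
      · have : χ (a, x) = 0 := hχO _ fun h => hx fun i => Ioo_subset_Icc_self (h.1 i)
        simp [indicator, this]
    rw [h5, ← lintegral_add_left hm1]
    have h6 : ∀ x, ENNReal.ofReal (χ (a, x)) + ENNReal.ofReal (1 - χ (a, x)) = 1 := by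
      intro x
      rw [← ENNReal.ofReal_add (hχ0 _) (by linarith [hχ1 (a, x)])]
      simp
    simp [h6]
  · rw [Measure.map_apply hfc.measurable MeasurableSet.univ, preimage_univ,
      withDensity_apply _ MeasurableSet.univ, Measure.restrict_univ, ← hlin]
    exact (ENNReal.ofReal_lt_ofReal_iff hε).2 ha

end Row10

/-- For `ψ` totally non-planar and `C^{m+1}` and `B ⊆ A_k^k` compact,
for every `ε > 0` there is a constant `C > 0` such that the pushforward `(Ψ_a)_*λ_{[0,1]^k}`
decomposes as a measure with a nonnegative `C^m` density of `C^m`-norm less than `C`,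
plus an error of total mass less than `ε`, uniformly in `a ∈ B`. -/
theorem stmt10 (k m : ℕ) (ψ : ℝ → (Fin k → ℝ)) (hψ : TotallyNonPlanar k ψ)
    (hsmooth : ContDiffOn ℝ (m + 1 : ℕ) ψ (Set.Icc 0 1))
    (B : Set (Fin k → Ak k)) (hB : IsCompact B) (ε : ℝ) (hε : 0 < ε) :
    ∃ C > (0:ℝ), ∀ a ∈ B, ∃ τ₁ τ₂ : Measure (Fin k → ℝ),
      Measure.map (PsiMap k ψ a)
          (volume.restrict {x : Fin k → ℝ | ∀ i, x i ∈ Set.Icc (0:ℝ) 1}) = τ₁ + τ₂ ∧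
      τ₂ Set.univ < ENNReal.ofReal ε ∧
      (∃ g : (Fin k → ℝ) → ℝ, ContDiff ℝ (m : ℕ) g ∧ (∀ x, 0 ≤ g x) ∧
        τ₁ = volume.withDensity (fun x => ENNReal.ofReal (g x)) ∧
        ∀ i ≤ m, ∀ x, ‖iteratedFDeriv ℝ i g x‖ < C) := by
  classical
  have hI : ∀ s ∈ Set.Ioo (0:ℝ) 1, Set.Icc (0:ℝ) 1 ∈ nhds s := fun s hs =>
    Icc_mem_nhds hs.1 hs.2
  have hud : UniqueDiffOn ℝ (Set.Icc (0:ℝ) 1) := uniqueDiffOn_Icc zero_lt_one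
  set ψ' : ℝ → Fin k → ℝ := Set.IccExtend zero_le_one ((Set.Icc (0:ℝ) 1).domRestrict ψ) with hψ'
  set φ : ℝ → Fin k → ℝ :=
    Set.IccExtend zero_le_one ((Set.Icc (0:ℝ) 1).domRestrict (curveDeriv k ψ)) with hφ
  have eψ : ∀ s ∈ Set.Icc (0:ℝ) 1, ψ' s = ψ s := fun s hs => by
    rw [hψ', Set.IccExtend_of_mem _ _ hs]; rfl
  have eφ : ∀ s ∈ Set.Icc (0:ℝ) 1, φ s = curveDeriv k ψ s := fun s hs => by
    rw [hφ, Set.IccExtend_of_mem _ _ hs]; rfl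
  have hcd : ContinuousOn (curveDeriv k ψ) (Set.Icc 0 1) :=
    hψ.1.continuousOn_derivWithin hud le_rfl
  have hψc : Continuous ψ' := Continuous.Icc_extend' (hψ.1.continuousOn.domRestrict)
  have hφc : Continuous φ := Continuous.Icc_extend' hcd.domRestrict
  have eψn : ∀ s ∈ Set.Ioo (0:ℝ) 1, ψ' =ᶠ[nhds s] ψ := fun s hs => by
    filter_upwards [hI s hs] with t ht using eψ t ht
  have eφn : ∀ s ∈ Set.Ioo (0:ℝ) 1, φ =ᶠ[nhds s] curveDeriv k ψ := fun s hs => by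
    filter_upwards [hI s hs] with t ht using eφ t ht
  have h1 : ∀ s ∈ Set.Ioo (0:ℝ) 1, ContDiffAt ℝ (m + 1 : ℕ) ψ' s := fun s hs =>
    (hsmooth.contDiffAt (hI s hs)).congr_of_eventuallyEq (eψn s hs)
  have h2 : ∀ s ∈ Set.Ioo (0:ℝ) 1, ContDiffAt ℝ m φ s := fun s hs =>
    ((hsmooth.derivWithin hud (m := m) (by push_cast; exact le_rfl)).contDiffAt
      (hI s hs)).congr_of_eventuallyEq (eφn s hs)
  have h3 : ∀ s ∈ Set.Ioo (0:ℝ) 1, HasDerivAt ψ' (φ s) s := fun s hs => by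
    rw [eφ s (Set.Ioo_subset_Icc_self hs)]
    have h4 := ((hψ.1.differentiableOn one_ne_zero) s (Set.Ioo_subset_Icc_self hs)).hasDerivWithinAt
    exact (h4.hasDerivAt (hI s hs)).congr_of_eventuallyEq (eψn s hs)
  have hnp : ∀ v : Fin k → ℝ, v ≠ 0 →
      ∀ᵐ s ∂(volume.restrict (Set.Icc (0:ℝ) 1)), ∑ i, φ s i * v i ≠ 0 := by
    intro v hv
    rw [ae_restrict_iff' measurableSet_Icc]
    refine measure_mono_null ?_ (hψ.2 v hv)
    intro s hs
    simp only [Set.mem_compl_iff, Set.mem_ofPred_eq, Classical.not_imp, not_not] at hs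
    refine ⟨hs.1, ?_⟩
    rw [← eφ s hs.1]
    exact hs.2
  set d : (Fin k → Ak k) → (Fin k → Fin k → ℝ) := fun a i j => (a i).val j j with hd
  have hdc : Continuous d := by
    refine continuous_pi fun i => continuous_pi fun j => ?_
    have hv : Continuous (fun b : Ak k => b.val) := continuous_subtype_val
    exact (hv.comp (continuous_apply i)).matrix_elem j j
  have hd0 : ∀ a i j, d a i j ≠ 0 := by
    intro a i j h0
    have h5 := (a i).2.2
    rw [← ((a i).2.1).diagonal_diag, Matrix.det_diagonal,
      Finset.prod_eq_zero (Finset.mem_univ j) (by exact h0)] at h5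
    exact zero_ne_one h5
  have hmap : ∀ a, Measure.map (PsiMap k ψ a)
          (volume.restrict {x : Fin k → ℝ | ∀ i, x i ∈ Set.Icc (0:ℝ) 1}) =
      Measure.map (fun x => Row10.Psi ψ' (d a, x))
          (volume.restrict {x : Fin k → ℝ | ∀ i, x i ∈ Set.Icc (0:ℝ) 1}) := by
    intro a
    have hQm : MeasurableSet {x : Fin k → ℝ | ∀ i, x i ∈ Set.Icc (0:ℝ) 1} := by
      have : {x : Fin k → ℝ | ∀ i, x i ∈ Set.Icc (0:ℝ) 1} =
        Set.univ.pi (fun _ => Set.Icc (0:ℝ) 1) := by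
          ext x; simp only [Set.mem_univ_pi]; rfl
      rw [this]; exact MeasurableSet.univ_pi fun _ => measurableSet_Icc
    refine Measure.map_congr ?_
    filter_upwards [ae_restrict_mem hQm] with x hx
    ext j
    simp only [PsiMap, Row10.Psi, Finset.sum_apply]
    refine Finset.sum_congr rfl fun i _ => ?_
    rw [eψ _ (hx i)]
    conv_lhs => rw [← ((a i).2.1).diagonal_diag]
    rw [Matrix.mulVec_diagonal]
    rfl
  have hloc := fun a : Fin k → Ak k => Row10.main_local ψ' φ hψc hφc h1 h2 h3 hnp ε hε (d a) (hd0 a)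
  choose C hC0 hC using hloc
  obtain ⟨t, -, ht⟩ := hB.elim_nhds_subcover _ (fun a _ => hdc.continuousAt.eventually (hC a))
  refine ⟨∑ a ∈ t, C a + 1, ?_, fun a ha => ?_⟩
  · have : 0 ≤ ∑ a ∈ t, C a := Finset.sum_nonneg fun a _ => (hC0 a).le
    linarith
  obtain ⟨b, hbt, hab⟩ := Set.mem_iUnion₂.1 (ht ha)
  obtain ⟨τ₁, τ₂, e1, e2, g, g1, g2, g3, g4⟩ := hab
  refine ⟨τ₁, τ₂, (hmap a).trans e1, e2, g, g1, g2, g3, fun i hi x => (g4 i hi x).trans ?_⟩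
  have := Finset.single_le_sum (f := C) (fun a _ => (hC0 a).le) hbt
  linarith
end
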